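/- arXiv:1807.11610 — 9 statements merged into one kernel-verified Lean document; each statement's English description precedes it below -/
import Mathlib

section
/- Let (M_k) be a finite family of n×n complex matrices with Σ_k M_k† M_k ⊑ I, defining E(ρ) = Σ_k M_k ρ M_k† and E*(A) = Σ_k M_k† A M_k, and let A, B be quantum predicates (Hermitian n×n matrices with 0 ⊑ A ⊑ I and 0 ⊑ B ⊑ I). Then the total-correctness condition — Re(tr(A·ρ)) ≤ Re(tr(B·E(ρ))) for every partial density operator ρ (positive semidefinite with tr(ρ) ≤ 1) — holds if and only if A ⊑ E*(B), i.e., E*(B) − A is positive semidefinite. -/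
/-!
The trace pairing moves the operation from `ρ` to its dual: cyclicity of the trace gives
`tr (B E(ρ)) - tr (A ρ) = tr (D ρ)` with `D = E*(B) - A` (`trace_dual_sub`). So the theorem says
that `D` is positive semidefinite iff `Re tr (D ρ) ≥ 0` for all partial density operators `ρ`.
If `D ⊒ 0`, write `ρ = C† C`, so that `tr (D ρ) = tr (C D C†) ≥ 0` (`trace_mul_re_nonneg`).
Conversely, testing on a rank-one state proportional to `x x†` gives `x† D x ≥ 0` for every
vector `x`; since `D` is Hermitian, this is positive semidefiniteness.
-/

open Matrix ComplexOrder

/-- Duality between `E` and `E*` under the trace pairing. -/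
lemma trace_dual_sub {n : ℕ} {K : Type*} [Fintype K]
    (M : K → Matrix (Fin n) (Fin n) ℂ) (A B ρ : Matrix (Fin n) (Fin n) ℂ) :
    (((∑ k, (M k)ᴴ * B * M k) - A) * ρ).trace =
      (B * ∑ k, M k * ρ * (M k)ᴴ).trace - (A * ρ).trace := by
  rw [Matrix.sub_mul, trace_sub, Finset.sum_mul, Finset.mul_sum, trace_sum, trace_sum]
  congr 1
  refine Finset.sum_congr rfl fun k _ => ?_
  rw [Matrix.mul_assoc, Matrix.mul_assoc, trace_mul_comm]
  simp only [Matrix.mul_assoc]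

lemma trace_mul_re_nonneg {n : ℕ} {D ρ : Matrix (Fin n) (Fin n) ℂ}
    (hD : D.PosSemidef) (hρ : ρ.PosSemidef) : 0 ≤ (D * ρ).trace.re := by
  obtain ⟨C, rfl⟩ : ∃ C, ρ = Cᴴ * C := by
    open scoped MatrixOrder in
    exact CStarAlgebra.nonneg_iff_eq_star_mul_self.mp hρ.nonneg
  rw [← Matrix.mul_assoc, trace_mul_comm, ← Matrix.mul_assoc]
  exact (Complex.le_def.mp (hD.mul_mul_conjTranspose_same C).trace_nonneg).1

/-- Characterisation of total correctness (Lemma on correctness, part 1):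
for a trace-nonincreasing quantum operation `E(ρ) = Σ_k M_k ρ M_k†` and quantum predicates
`A, B`, one has `Re (tr (A ρ)) ≤ Re (tr (B (E ρ)))` for all partial density operators `ρ`
iff `A ⊑ E*(B)`. -/
theorem total_correctness_iff_loewner {n : ℕ} {K : Type*} [Fintype K]
    (M : K → Matrix (Fin n) (Fin n) ℂ)
    (hM : ((1 : Matrix (Fin n) (Fin n) ℂ) - ∑ k, (M k)ᴴ * M k).PosSemidef)
    (A B : Matrix (Fin n) (Fin n) ℂ)
    (hA₀ : A.PosSemidef) (hA₁ : ((1 : Matrix (Fin n) (Fin n) ℂ) - A).PosSemidef)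
    (hB₀ : B.PosSemidef) (hB₁ : ((1 : Matrix (Fin n) (Fin n) ℂ) - B).PosSemidef) :
    (∀ ρ : Matrix (Fin n) (Fin n) ℂ, ρ.PosSemidef → ρ.trace.re ≤ 1 →
        ((A * ρ).trace).re ≤ ((B * ∑ k, M k * ρ * (M k)ᴴ).trace).re) ↔
      ((∑ k, (M k)ᴴ * B * M k) - A).PosSemidef := by
  constructor
  · intro h
    have hD : ((∑ k, (M k)ᴴ * B * M k) - A).IsHermitian :=
      (posSemidef_sum _ fun k _ => hB₀.conjTranspose_mul_mul_same (M k)).isHermitian.sub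
        hA₀.isHermitian
    refine .of_dotProduct_mulVec_nonneg hD fun x => ?_
    have hx : 0 ≤ (x ⬝ᵥ star x).re :=
      (Complex.le_def.mp (dotProduct_self_star_nonneg x)).1
    -- Normalising by `1 + ‖x‖²` bounds the trace by `1` without excluding `x = 0`.
    set c : ℝ := 1 + (x ⬝ᵥ star x).re with hc
    have hc0 : 0 < c := by positivity
    have hρ : (c⁻¹ • vecMulVec x (star x)).PosSemidef :=
      (posSemidef_vecMulVec_self_star x).smul (inv_nonneg.mpr hc0.le)
    have key := h _ hρ (by
      rw [trace_smul, trace_vecMulVec, Complex.smul_re, smul_eq_mul, inv_mul_le_iff₀ hc0]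
      linarith)
    rw [← sub_nonneg, ← Complex.sub_re, ← trace_dual_sub, Matrix.mul_smul, trace_smul,
      Complex.smul_re, smul_eq_mul, mul_vecMulVec, trace_vecMulVec, dotProduct_comm] at key
    refine Complex.le_def.mpr ⟨?_, (hD.im_star_dotProduct_mulVec_self x).symm⟩
    exact nonneg_of_mul_nonneg_right key (inv_pos.mpr hc0)
  · intro hD ρ hρ _
    rw [← sub_nonneg, ← Complex.sub_re, ← trace_dual_sub]
    exact trace_mul_re_nonneg hD hρ
end

section
/- Let (M_k) be a finite family of n×n complex matrices with Σ_k M_k† M_k ⊑ I, defining E(ρ) = Σ_k M_k ρ M_k† and E*(A) = Σ_k M_k† A M_k, and let A, B be quantum predicates (Hermitian n×n matrices with 0 ⊑ A ⊑ I and 0 ⊑ B ⊑ I). Then the partial-correctness condition — Re(tr(A·ρ)) ≤ Re(tr(B·E(ρ))) + (Re(tr(ρ)) − Re(tr(E(ρ)))) for every partial density operator ρ (positive semidefinite with tr(ρ) ≤ 1) — holds if and only if A ⊑ E*(B) + (I − E*(I)), i.e., E*(B) + I − E*(I) − A is positive semidefinite. -/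
/-!
Put `D = E*(B) + (I - E*(I)) - A`. Cyclicity of the trace gives
`tr (D ρ) = tr (B E(ρ)) + (tr ρ - tr E(ρ)) - tr (A ρ)` (`trace_defect_mul`), so partial correctness
says exactly that `Re (tr (D ρ)) ≥ 0` for every partial density operator `ρ`. As `D` is Hermitian,
this is equivalent to `D ⊒ 0` by self-duality of the positive semidefinite cone
(`posSemidef_iff_trace_mul_re_nonneg`): rank-one operators detect positivity, the bound
`tr ρ ≤ 1` being harmless because `ρ` may be rescaled; conversely `ρ = C† C` gives
`tr (D ρ) = tr (C D C†) ≥ 0`.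
-/

open Matrix ComplexOrder

/-- The duality `tr (B E(ρ)) = tr (E*(B) ρ)`. -/
lemma trace_mul_kraus {n : ℕ} {K : Type*} [Fintype K] (M : K → Matrix (Fin n) (Fin n) ℂ)
    (B ρ : Matrix (Fin n) (Fin n) ℂ) :
    (B * ∑ k, M k * ρ * (M k)ᴴ).trace = ((∑ k, (M k)ᴴ * B * M k) * ρ).trace := by
  rw [Finset.mul_sum, Finset.sum_mul, trace_sum, trace_sum]
  refine Finset.sum_congr rfl fun k _ => ?_
  rw [← Matrix.mul_assoc, Matrix.trace_mul_comm]
  simp only [Matrix.mul_assoc]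

lemma trace_defect_mul {n : ℕ} {K : Type*} [Fintype K] (M : K → Matrix (Fin n) (Fin n) ℂ)
    (A B ρ : Matrix (Fin n) (Fin n) ℂ) :
    (((∑ k, (M k)ᴴ * B * M k) + (1 - ∑ k, (M k)ᴴ * 1 * M k) - A) * ρ).trace =
      (B * ∑ k, M k * ρ * (M k)ᴴ).trace + (ρ.trace - (∑ k, M k * ρ * (M k)ᴴ).trace) -
        (A * ρ).trace := by
  have h1 := trace_mul_kraus M 1 ρ
  rw [Matrix.one_mul] at h1
  rw [trace_mul_kraus M B ρ, h1]
  simp only [Matrix.sub_mul, Matrix.add_mul, trace_sub, trace_add, Matrix.one_mul]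

open scoped MatrixOrder in
/-- Self-duality of the positive semidefinite cone, tested on partial density operators only. -/
lemma posSemidef_iff_trace_mul_re_nonneg {n : ℕ} {D : Matrix (Fin n) (Fin n) ℂ}
    (hD : D.IsHermitian) :
    D.PosSemidef ↔ ∀ ρ : Matrix (Fin n) (Fin n) ℂ, ρ.PosSemidef → ρ.trace.re ≤ 1 →
      0 ≤ (D * ρ).trace.re := by
  constructor
  · intro h ρ hρ _
    obtain ⟨C, rfl⟩ := CStarAlgebra.nonneg_iff_eq_star_mul_self.mp hρ.nonneg
    have h2 := (h.mul_mul_conjTranspose_same C).trace_nonneg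
    rw [Matrix.mul_assoc, Matrix.trace_mul_comm, Matrix.mul_assoc] at h2
    exact (Complex.le_def.mp h2).1
  · intro h
    refine .of_dotProduct_mulVec_nonneg hD fun x => ?_
    have hs : 0 ≤ (x ⬝ᵥ star x).re :=
      (Complex.le_def.mp (dotProduct_self_star_nonneg x)).1
    -- `c` scales the trace of `x x†` below `1`, also when `x = 0`.
    set c : ℝ := (1 + (x ⬝ᵥ star x).re)⁻¹ with hc
    have hc0 : 0 < c := by positivity
    have hρ := (posSemidef_vecMulVec_self_star x).smul hc0.le
    have key := h _ hρ (by
      rw [trace_smul, trace_vecMulVec, Complex.real_smul, Complex.re_ofReal_mul, hc,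
        inv_mul_le_iff₀ (by positivity)]
      linarith)
    rw [Matrix.mul_smul, mul_vecMulVec, trace_smul, trace_vecMulVec, Complex.real_smul,
      Complex.re_ofReal_mul, dotProduct_comm] at key
    refine Complex.le_def.mpr ⟨nonneg_of_mul_nonneg_right key hc0, ?_⟩
    exact (hD.im_star_dotProduct_mulVec_self x).symm

/-- Characterisation of partial correctness (Lemma on correctness, part 2):
for a trace-nonincreasing quantum operation `E(ρ) = Σ_k M_k ρ M_k†` and quantum predicates
`A, B`, one has `Re (tr (A ρ)) ≤ Re (tr (B (E ρ))) + (Re (tr ρ) - Re (tr (E ρ)))` for all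
partial density operators `ρ` iff `A ⊑ E*(B) + (I - E*(I))`. -/
theorem partial_correctness_iff_loewner {n : ℕ} {K : Type*} [Fintype K]
    (M : K → Matrix (Fin n) (Fin n) ℂ)
    (hM : ((1 : Matrix (Fin n) (Fin n) ℂ) - ∑ k, (M k)ᴴ * M k).PosSemidef)
    (A B : Matrix (Fin n) (Fin n) ℂ)
    (hA₀ : A.PosSemidef) (hA₁ : ((1 : Matrix (Fin n) (Fin n) ℂ) - A).PosSemidef)
    (hB₀ : B.PosSemidef) (hB₁ : ((1 : Matrix (Fin n) (Fin n) ℂ) - B).PosSemidef) :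
    (∀ ρ : Matrix (Fin n) (Fin n) ℂ, ρ.PosSemidef → ρ.trace.re ≤ 1 →
        ((A * ρ).trace).re ≤
          ((B * ∑ k, M k * ρ * (M k)ᴴ).trace).re +
            (ρ.trace.re - ((∑ k, M k * ρ * (M k)ᴴ).trace).re)) ↔
      ((∑ k, (M k)ᴴ * B * M k) +
        ((1 : Matrix (Fin n) (Fin n) ℂ) - ∑ k, (M k)ᴴ * (1 : Matrix (Fin n) (Fin n) ℂ) * M k)
        - A).PosSemidef := by
  have hD : ((∑ k, (M k)ᴴ * B * M k) +
      ((1 : Matrix (Fin n) (Fin n) ℂ) - ∑ k, (M k)ᴴ * (1 : Matrix (Fin n) (Fin n) ℂ) * M k)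
      - A).IsHermitian := by
    have hsum : ∀ {X : Matrix (Fin n) (Fin n) ℂ}, X.IsHermitian →
        (∑ k, (M k)ᴴ * X * M k).IsHermitian := fun hX => by
      rw [IsHermitian, conjTranspose_sum]
      exact Finset.sum_congr rfl fun k _ => isHermitian_conjTranspose_mul_mul (M k) hX
    exact ((hsum hB₀.1).add (isHermitian_one.sub (hsum isHermitian_one))).sub hA₀.1
  rw [posSemidef_iff_trace_mul_re_nonneg hD]
  refine forall_congr' fun ρ => forall_congr' fun _ => forall_congr' fun _ => ?_
  rw [trace_defect_mul]
  simp only [Complex.sub_re, Complex.add_re, sub_nonneg]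
end

section
/- (Soundness of the invariance axiom Ax.Inv for partial correctness.) Let B be a quantum predicate on ℂ^m (a Hermitian m×m matrix with 0 ⊑ B ⊑ I), and let D be an n×n Hermitian matrix with 0 ⊑ D ⊑ I (playing the role of E*(I) for a trace-nonincreasing quantum operation acting on a disjoint set of variables). Then B ⊗ I_n ⊑ (B ⊗ D) + (I_m ⊗ (I_n − D)) in the Löwner order on (m·n)×(m·n) matrices, i.e., B ⊗ D + I_m ⊗ (I_n − D) − B ⊗ I_n is positive semidefinite. -/
open ComplexOrder Kronecker

/-- Soundness of the invariance axiom (Ax.Inv) for partial correctness: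
for a quantum predicate `B` on `ℂ^m` and a Hermitian `D` with `0 ⊑ D ⊑ I` on `ℂ^n`
(playing the role of `E*(I)`), one has
`B ⊗ I ⊑ (B ⊗ D) + (I ⊗ (I - D))` in the Löwner order. -/
theorem ax_inv_sound {m n : ℕ}
    (B : Matrix (Fin m) (Fin m) ℂ)
    (hB₀ : B.PosSemidef) (hB₁ : ((1 : Matrix (Fin m) (Fin m) ℂ) - B).PosSemidef)
    (D : Matrix (Fin n) (Fin n) ℂ)
    (hD₀ : D.PosSemidef) (hD₁ : ((1 : Matrix (Fin n) (Fin n) ℂ) - D).PosSemidef) :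
    (B ⊗ₖ D + (1 : Matrix (Fin m) (Fin m) ℂ) ⊗ₖ ((1 : Matrix (Fin n) (Fin n) ℂ) - D)
      - B ⊗ₖ (1 : Matrix (Fin n) (Fin n) ℂ)).PosSemidef := by
  -- The difference factors as a Kronecker product of positive semidefinite matrices.
  have h : B ⊗ₖ D + (1 : Matrix (Fin m) (Fin m) ℂ) ⊗ₖ ((1 : Matrix (Fin n) (Fin n) ℂ) - D)
      - B ⊗ₖ (1 : Matrix (Fin n) (Fin n) ℂ) = (1 - B) ⊗ₖ (1 - D) := by
    ext ⟨i, j⟩ ⟨k, l⟩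
    simp only [Matrix.sub_apply, Matrix.add_apply, Matrix.kronecker_apply]
    ring
  rw [h]
  exact hB₁.kronecker hD₁
end

section
/- (Soundness of rule R.CC for partial correctness.) Let (M_k) be a finite family of n×n complex matrices with Σ_k M_k† M_k ⊑ I, defining E*(A) = Σ_k M_k† A M_k. Let A_1, …, A_m and B_1, …, B_m be quantum predicates (Hermitian n×n matrices between 0 and I) and p_1, …, p_m ≥ 0 real numbers with Σ_i p_i ≤ 1. If A_i ⊑ E*(B_i) + (I − E*(I)) for every i = 1, …, m, then Σ_i p_i A_i ⊑ E*(Σ_i p_i B_i) + (I − E*(I)). -/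
/-!
Write `D = I - E*(I)`, which is positive semidefinite because `E` is trace-nonincreasing. By
linearity of `E*`, the difference of the two sides of the claim equals
`∑ i, p i • (E*(B i) + D - A i) + (1 - ∑ i, p i) • D`. Each `E*(B i) + D - A i` is positive
semidefinite by hypothesis, so this is a combination of positive semidefinite matrices with
nonnegative coefficients.
-/

open Matrix ComplexOrder

/-- Soundness of the rule (R.CC) (probabilistic/convex combination) for partial correctness:
if `A_i ⊑ E*(B_i) + (I - E*(I))` for all `i`, `p_i ≥ 0`, `Σ_i p_i ≤ 1`, then
`Σ_i p_i A_i ⊑ E*(Σ_i p_i B_i) + (I - E*(I))`. -/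
theorem rule_cc_sound {n m : ℕ} {K : Type*} [Fintype K]
    (M : K → Matrix (Fin n) (Fin n) ℂ)
    (hM : ((1 : Matrix (Fin n) (Fin n) ℂ) - ∑ k, (M k)ᴴ * M k).PosSemidef)
    (A B : Fin m → Matrix (Fin n) (Fin n) ℂ)
    (hA₀ : ∀ i, (A i).PosSemidef) (hA₁ : ∀ i, ((1 : Matrix (Fin n) (Fin n) ℂ) - A i).PosSemidef)
    (hB₀ : ∀ i, (B i).PosSemidef) (hB₁ : ∀ i, ((1 : Matrix (Fin n) (Fin n) ℂ) - B i).PosSemidef)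
    (p : Fin m → ℝ) (hp : ∀ i, 0 ≤ p i) (hpsum : ∑ i, p i ≤ 1)
    (h : ∀ i, ((∑ k, (M k)ᴴ * B i * M k) +
        ((1 : Matrix (Fin n) (Fin n) ℂ) - ∑ k, (M k)ᴴ * (1 : Matrix (Fin n) (Fin n) ℂ) * M k)
        - A i).PosSemidef) :
    ((∑ k, (M k)ᴴ * (∑ i, p i • B i) * M k) +
      ((1 : Matrix (Fin n) (Fin n) ℂ) - ∑ k, (M k)ᴴ * (1 : Matrix (Fin n) (Fin n) ℂ) * M k)
      - ∑ i, p i • A i).PosSemidef := by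
  set D := (1 : Matrix (Fin n) (Fin n) ℂ) -
    ∑ k, (M k)ᴴ * (1 : Matrix (Fin n) (Fin n) ℂ) * M k with hDdef
  have hD : D.PosSemidef := by simpa [hDdef] using hM
  have hlin : (∑ k, (M k)ᴴ * (∑ i, p i • B i) * M k) =
      ∑ i, p i • ∑ k, (M k)ᴴ * B i * M k := by
    simp only [Finset.mul_sum, Finset.sum_mul, Finset.smul_sum, Matrix.mul_smul,
      Matrix.smul_mul]
    exact Finset.sum_comm
  have hdecomp : (∑ k, (M k)ᴴ * (∑ i, p i • B i) * M k) + D - ∑ i, p i • A i =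
      (∑ i, p i • ((∑ k, (M k)ᴴ * B i * M k) + D - A i)) + (1 - ∑ i, p i) • D := by
    rw [hlin]
    simp only [smul_sub, smul_add, Finset.sum_sub_distrib, Finset.sum_add_distrib, sub_smul,
      one_smul, ← Finset.sum_smul]
    abel
  rw [hdecomp]
  exact (posSemidef_sum _ fun i _ => (h i).smul (hp i)).add (hD.smul (sub_nonneg.mpr hpsum))
end

section
/- (Soundness of rule R.Inv for partial correctness.) Let (M_k) be a finite family of n×n complex matrices with Σ_k M_k† M_k ⊑ I; extend it to ℂ^m ⊗ ℂ^n by the Kraus operators I_m ⊗ M_k, defining Φ(A) = Σ_k (I_m ⊗ M_k)† A (I_m ⊗ M_k) on (m·n)×(m·n) matrices. Let A, B be quantum predicates on ℂ^m ⊗ ℂ^n, let C be a quantum predicate on ℂ^m, and let p, q ≥ 0 be reals with p + q ≤ 1. If A ⊑ Φ(B) + (I − Φ(I)), then p·A + q·(C ⊗ I_n) ⊑ Φ(p·B + q·(C ⊗ I_n)) + (I − Φ(I)). -/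
/-!
Write `E = ∑ Mₖ† Mₖ` and `D = I - E ⊒ 0`. Since the Kraus operators act on the second factor only,
`Φ(X ⊗ I) = X ⊗ E` (`sum_conj_kronecker_one`); in particular `I - Φ(I) = I ⊗ D`. By linearity the
difference of the two sides of the conclusion is
`p (Φ(B) + (I - Φ(I)) - A) + (1 - p - q) (I ⊗ D) + q ((I - C) ⊗ D)`,
a nonnegative combination of positive semidefinite matrices.
-/

open Matrix ComplexOrder Kronecker

/-- A Heisenberg-picture operation on the second factor sends `X ⊗ I` to `X ⊗ ∑ Mₖ† Mₖ`. -/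
lemma sum_conj_kronecker_one {m n : ℕ} {K : Type*} [Fintype K]
    (M : K → Matrix (Fin n) (Fin n) ℂ) (X : Matrix (Fin m) (Fin m) ℂ) :
    ∑ k, ((1 : Matrix (Fin m) (Fin m) ℂ) ⊗ₖ M k)ᴴ * (X ⊗ₖ (1 : Matrix (Fin n) (Fin n) ℂ)) *
      ((1 : Matrix (Fin m) (Fin m) ℂ) ⊗ₖ M k) = X ⊗ₖ ∑ k, (M k)ᴴ * M k := by
  simp only [conjTranspose_kronecker, ← mul_kronecker_mul, conjTranspose_one, one_mul, mul_one]
  ext ⟨i, a⟩ ⟨j, b⟩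
  simp [Matrix.sum_apply, Finset.mul_sum]

/-- Soundness of the rule (R.Inv) for partial correctness: for a quantum operation acting
(in the Heisenberg picture) on the second factor of `ℂ^m ⊗ ℂ^n` by
`Φ(A) = Σ_k (I ⊗ M_k)† A (I ⊗ M_k)`, a predicate `C` on the first factor and reals
`p, q ≥ 0` with `p + q ≤ 1`:
if `A ⊑ Φ(B) + (I - Φ(I))`, then `p A + q (C ⊗ I) ⊑ Φ(p B + q (C ⊗ I)) + (I - Φ(I))`. -/
theorem rule_inv_sound {m n : ℕ} {K : Type*} [Fintype K]
    (M : K → Matrix (Fin n) (Fin n) ℂ)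
    (hM : ((1 : Matrix (Fin n) (Fin n) ℂ) - ∑ k, (M k)ᴴ * M k).PosSemidef)
    (A B : Matrix (Fin m × Fin n) (Fin m × Fin n) ℂ)
    (hA₀ : A.PosSemidef) (hA₁ : ((1 : Matrix (Fin m × Fin n) (Fin m × Fin n) ℂ) - A).PosSemidef)
    (hB₀ : B.PosSemidef) (hB₁ : ((1 : Matrix (Fin m × Fin n) (Fin m × Fin n) ℂ) - B).PosSemidef)
    (C : Matrix (Fin m) (Fin m) ℂ)
    (hC₀ : C.PosSemidef) (hC₁ : ((1 : Matrix (Fin m) (Fin m) ℂ) - C).PosSemidef)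
    (p q : ℝ) (hp : 0 ≤ p) (hq : 0 ≤ q) (hpq : p + q ≤ 1)
    (h : ((∑ k, ((1 : Matrix (Fin m) (Fin m) ℂ) ⊗ₖ M k)ᴴ * B * ((1 : Matrix (Fin m) (Fin m) ℂ) ⊗ₖ M k)) +
        ((1 : Matrix (Fin m × Fin n) (Fin m × Fin n) ℂ) -
          ∑ k, ((1 : Matrix (Fin m) (Fin m) ℂ) ⊗ₖ M k)ᴴ * (1 : Matrix (Fin m × Fin n) (Fin m × Fin n) ℂ) *
            ((1 : Matrix (Fin m) (Fin m) ℂ) ⊗ₖ M k))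
        - A).PosSemidef) :
    ((∑ k, ((1 : Matrix (Fin m) (Fin m) ℂ) ⊗ₖ M k)ᴴ *
        (p • B + q • (C ⊗ₖ (1 : Matrix (Fin n) (Fin n) ℂ))) * ((1 : Matrix (Fin m) (Fin m) ℂ) ⊗ₖ M k)) +
      ((1 : Matrix (Fin m × Fin n) (Fin m × Fin n) ℂ) -
        ∑ k, ((1 : Matrix (Fin m) (Fin m) ℂ) ⊗ₖ M k)ᴴ * (1 : Matrix (Fin m × Fin n) (Fin m × Fin n) ℂ) *
          ((1 : Matrix (Fin m) (Fin m) ℂ) ⊗ₖ M k))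
      - (p • A + q • (C ⊗ₖ (1 : Matrix (Fin n) (Fin n) ℂ)))).PosSemidef := by
  have hone : ∑ k, ((1 : Matrix (Fin m) (Fin m) ℂ) ⊗ₖ M k)ᴴ *
      (1 : Matrix (Fin m × Fin n) (Fin m × Fin n) ℂ) * ((1 : Matrix (Fin m) (Fin m) ℂ) ⊗ₖ M k) =
      (1 : Matrix (Fin m) (Fin m) ℂ) ⊗ₖ ∑ k, (M k)ᴴ * M k := by
    rw [← sum_conj_kronecker_one, one_kronecker_one]
  have hlin : ∑ k, ((1 : Matrix (Fin m) (Fin m) ℂ) ⊗ₖ M k)ᴴ *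
      (p • B + q • (C ⊗ₖ (1 : Matrix (Fin n) (Fin n) ℂ))) *
        ((1 : Matrix (Fin m) (Fin m) ℂ) ⊗ₖ M k) =
      p • (∑ k, ((1 : Matrix (Fin m) (Fin m) ℂ) ⊗ₖ M k)ᴴ * B *
        ((1 : Matrix (Fin m) (Fin m) ℂ) ⊗ₖ M k)) + q • (C ⊗ₖ ∑ k, (M k)ᴴ * M k) := by
    rw [← sum_conj_kronecker_one, Finset.smul_sum, Finset.smul_sum, ← Finset.sum_add_distrib]
    simp only [mul_add, add_mul, mul_smul_comm, smul_mul_assoc]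
  rw [hone] at h ⊢
  rw [hlin]
  have hpos := ((h.smul hp).add
    (((PosSemidef.one (n := Fin m) (R := ℂ)).kronecker hM).smul (sub_nonneg.2 hpq))).add
    ((hC₁.kronecker hM).smul hq)
  convert hpos using 1
  ext ⟨i, a⟩ ⟨j, b⟩
  simp only [Matrix.add_apply, Matrix.sub_apply, Matrix.smul_apply, kroneckerMap_apply,
    Complex.real_smul, ← one_kronecker_one (α := ℂ) (m := Fin m) (n := Fin n)]
  push_cast
  ring
end

section
/- (Soundness of rule R.SO for partial correctness.) Let (M_k) be a finite family of n×n complex matrices with Σ_k M_k† M_k ⊑ I, and define Φ(A) = Σ_k (I_m ⊗ M_k)† A (I_m ⊗ M_k) on (m·n)×(m·n) matrices. Let (N_j) be a finite family of m×m complex matrices with Σ_j N_j† N_j ⊑ I, and define Ψ(A) = Σ_j (N_j ⊗ I_n)† A (N_j ⊗ I_n). Let A, B be quantum predicates on ℂ^m ⊗ ℂ^n. If A ⊑ Φ(B) + (I − Φ(I)), then Ψ(A) ⊑ Φ(Ψ(B)) + (I − Φ(I)). -/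
/-!
Write `C = Φ(B) + (I - Φ(I)) - A`, which is positive semidefinite by hypothesis. As `Ψ` is positive,
`Ψ(C) ⊒ 0`. Since `Φ` and `Ψ` act on different tensor factors, they commute
(`sum_conj_kronecker_comm`), so the difference between the matrix in the conclusion and `Ψ(C)` is
`I - Φ(I) - Ψ(I) + Ψ(Φ(I))`. This factors as `(I - ∑ N_j† N_j) ⊗ (I - ∑ M_k† M_k)`
(`one_sub_kronecker_one_sub`), a Kronecker product of positive semidefinite matrices.
-/

open Matrix ComplexOrder Kronecker

/-- The super-operators `Φ` and `Ψ` commute, because they act on different tensor factors. -/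
lemma sum_conj_kronecker_comm {m n : ℕ} {K J : Type*} [Fintype K] [Fintype J]
    (M : K → Matrix (Fin n) (Fin n) ℂ) (N : J → Matrix (Fin m) (Fin m) ℂ)
    (X : Matrix (Fin m × Fin n) (Fin m × Fin n) ℂ) :
    ∑ k, ((1 : Matrix (Fin m) (Fin m) ℂ) ⊗ₖ M k)ᴴ *
        (∑ j, (N j ⊗ₖ (1 : Matrix (Fin n) (Fin n) ℂ))ᴴ * X *
          (N j ⊗ₖ (1 : Matrix (Fin n) (Fin n) ℂ))) *
        ((1 : Matrix (Fin m) (Fin m) ℂ) ⊗ₖ M k) =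
      ∑ j, (N j ⊗ₖ (1 : Matrix (Fin n) (Fin n) ℂ))ᴴ *
        (∑ k, ((1 : Matrix (Fin m) (Fin m) ℂ) ⊗ₖ M k)ᴴ * X *
          ((1 : Matrix (Fin m) (Fin m) ℂ) ⊗ₖ M k)) *
        (N j ⊗ₖ (1 : Matrix (Fin n) (Fin n) ℂ)) := by
  have hc : ∀ k j, (N j ⊗ₖ (1 : Matrix (Fin n) (Fin n) ℂ)) * ((1 : Matrix (Fin m) (Fin m) ℂ) ⊗ₖ M k)
      = ((1 : Matrix (Fin m) (Fin m) ℂ) ⊗ₖ M k) * (N j ⊗ₖ (1 : Matrix (Fin n) (Fin n) ℂ)) := by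
    intro k j
    simp only [← mul_kronecker_mul, one_mul, mul_one]
  simp only [Finset.mul_sum, Finset.sum_mul]
  rw [Finset.sum_comm]
  refine Finset.sum_congr rfl fun j _ => Finset.sum_congr rfl fun k _ => ?_
  have hc' := congrArg conjTranspose (hc k j)
  rw [conjTranspose_mul, conjTranspose_mul] at hc'
  simp only [Matrix.mul_assoc, hc k j]
  simp only [← Matrix.mul_assoc, hc']

lemma sum_conj_one_right {m n : ℕ} {K : Type*} [Fintype K] (M : K → Matrix (Fin n) (Fin n) ℂ) :
    ∑ k, ((1 : Matrix (Fin m) (Fin m) ℂ) ⊗ₖ M k)ᴴ *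
        (1 : Matrix (Fin m × Fin n) (Fin m × Fin n) ℂ) * ((1 : Matrix (Fin m) (Fin m) ℂ) ⊗ₖ M k) =
      (1 : Matrix (Fin m) (Fin m) ℂ) ⊗ₖ ∑ k, (M k)ᴴ * M k := by
  simp only [Matrix.mul_one, conjTranspose_kronecker, ← mul_kronecker_mul, conjTranspose_one]
  exact (map_sum (kroneckerBilinear (R := ℂ) (α := ℂ) (1 : Matrix (Fin m) (Fin m) ℂ)) _ _).symm

/-- The factorization of `(I - Φ(I)) - Ψ(I - Φ(I))` as a Kronecker product, where `Φ(I) = I ⊗ S`;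
`S` stands for `∑ M_k† M_k`, by `sum_conj_one_right`. -/
lemma one_sub_kronecker_one_sub {m n : ℕ} {J : Type*} [Fintype J]
    (N : J → Matrix (Fin m) (Fin m) ℂ) (S : Matrix (Fin n) (Fin n) ℂ) :
    (1 - ∑ j, (N j)ᴴ * N j) ⊗ₖ (1 - S) =
      (1 - (1 : Matrix (Fin m) (Fin m) ℂ) ⊗ₖ S) -
        ∑ j, (N j ⊗ₖ (1 : Matrix (Fin n) (Fin n) ℂ))ᴴ * (1 - (1 : Matrix (Fin m) (Fin m) ℂ) ⊗ₖ S) *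
          (N j ⊗ₖ (1 : Matrix (Fin n) (Fin n) ℂ)) := by
  have h1 : (1 : Matrix (Fin m × Fin n) (Fin m × Fin n) ℂ) - (1 : Matrix (Fin m) (Fin m) ℂ) ⊗ₖ S
      = (1 : Matrix (Fin m) (Fin m) ℂ) ⊗ₖ (1 - S) := by
    rw [← one_kronecker_one]
    exact (map_sub (kroneckerBilinear (R := ℂ) (α := ℂ) (1 : Matrix (Fin m) (Fin m) ℂ)) _ _).symm
  rw [h1]
  simp only [conjTranspose_kronecker, ← mul_kronecker_mul, conjTranspose_one, Matrix.mul_one,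
    Matrix.one_mul]
  let R : Matrix (Fin m) (Fin m) ℂ →ₗ[ℂ] Matrix (Fin m × Fin n) (Fin m × Fin n) ℂ :=
    (kroneckerBilinear (R := ℂ) (α := ℂ)).flip (1 - S)
  change R (1 - ∑ j, (N j)ᴴ * N j) = R 1 - ∑ j, R ((N j)ᴴ * N j)
  rw [map_sub, map_sum]

/-- Soundness of the rule (R.SO) for partial correctness: with
`Φ(A) = Σ_k (I ⊗ M_k)† A (I ⊗ M_k)` acting on the second factor and
`Ψ(A) = Σ_j (N_j ⊗ I)† A (N_j ⊗ I)` acting on the first factor of `ℂ^m ⊗ ℂ^n`: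
if `A ⊑ Φ(B) + (I - Φ(I))`, then `Ψ(A) ⊑ Φ(Ψ(B)) + (I - Φ(I))`. -/
theorem rule_so_sound {m n : ℕ} {K J : Type*} [Fintype K] [Fintype J]
    (M : K → Matrix (Fin n) (Fin n) ℂ)
    (hM : ((1 : Matrix (Fin n) (Fin n) ℂ) - ∑ k, (M k)ᴴ * M k).PosSemidef)
    (N : J → Matrix (Fin m) (Fin m) ℂ)
    (hN : ((1 : Matrix (Fin m) (Fin m) ℂ) - ∑ j, (N j)ᴴ * N j).PosSemidef)
    (A B : Matrix (Fin m × Fin n) (Fin m × Fin n) ℂ)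
    (hA₀ : A.PosSemidef) (hA₁ : ((1 : Matrix (Fin m × Fin n) (Fin m × Fin n) ℂ) - A).PosSemidef)
    (hB₀ : B.PosSemidef) (hB₁ : ((1 : Matrix (Fin m × Fin n) (Fin m × Fin n) ℂ) - B).PosSemidef)
    (h : ((∑ k, ((1 : Matrix (Fin m) (Fin m) ℂ) ⊗ₖ M k)ᴴ * B * ((1 : Matrix (Fin m) (Fin m) ℂ) ⊗ₖ M k)) +
        ((1 : Matrix (Fin m × Fin n) (Fin m × Fin n) ℂ) -
          ∑ k, ((1 : Matrix (Fin m) (Fin m) ℂ) ⊗ₖ M k)ᴴ * (1 : Matrix (Fin m × Fin n) (Fin m × Fin n) ℂ) *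
            ((1 : Matrix (Fin m) (Fin m) ℂ) ⊗ₖ M k))
        - A).PosSemidef) :
    ((∑ k, ((1 : Matrix (Fin m) (Fin m) ℂ) ⊗ₖ M k)ᴴ *
        (∑ j, (N j ⊗ₖ (1 : Matrix (Fin n) (Fin n) ℂ))ᴴ * B * (N j ⊗ₖ (1 : Matrix (Fin n) (Fin n) ℂ))) *
        ((1 : Matrix (Fin m) (Fin m) ℂ) ⊗ₖ M k)) +
      ((1 : Matrix (Fin m × Fin n) (Fin m × Fin n) ℂ) -
        ∑ k, ((1 : Matrix (Fin m) (Fin m) ℂ) ⊗ₖ M k)ᴴ * (1 : Matrix (Fin m × Fin n) (Fin m × Fin n) ℂ) *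
          ((1 : Matrix (Fin m) (Fin m) ℂ) ⊗ₖ M k))
      - ∑ j, (N j ⊗ₖ (1 : Matrix (Fin n) (Fin n) ℂ))ᴴ * A * (N j ⊗ₖ (1 : Matrix (Fin n) (Fin n) ℂ))).PosSemidef := by
  have hΨC := posSemidef_sum Finset.univ fun j _ =>
    h.conjTranspose_mul_mul_same (N j ⊗ₖ (1 : Matrix (Fin n) (Fin n) ℂ))
  have hrest := hN.kronecker hM
  rw [one_sub_kronecker_one_sub] at hrest
  rw [sum_conj_one_right] at hΨC ⊢
  rw [sum_conj_kronecker_comm]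
  convert hΨC.add hrest using 1
  simp only [Matrix.mul_sub, Matrix.mul_add, Matrix.sub_mul, Matrix.add_mul,
    Finset.sum_add_distrib, Finset.sum_sub_distrib]
  abel
end

section
/- (Soundness of rule R.Lim for partial correctness.) Let (M_k) be a finite family of n×n complex matrices with Σ_k M_k† M_k ⊑ I, defining E*(A) = Σ_k M_k† A M_k. Let (A_j)_{j∈ℕ} and (B_j)_{j∈ℕ} be sequences of quantum predicates (Hermitian n×n matrices between 0 and I) such that (A_j) is increasing and (B_j) is decreasing with respect to the Löwner order, A_j converges to A and B_j converges to B (in the topology of n×n complex matrices). If A_j ⊑ E*(B_j) + (I − E*(I)) for every j, then A ⊑ E*(B) + (I − E*(I)). -/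
/-!
The positive semidefinite cone is closed, since it is cut out by the closed conditions
`Mᴴ = M` and `0 ≤ x⋆ M x`. The map `(X, Y) ↦ E*(Y) + (I - E*(I)) - X` is continuous, so the
hypotheses at the pairs `(A j, B j)` pass to the limit.
-/

open Matrix ComplexOrder Filter

theorem isClosed_setOf_posSemidef {n : ℕ} :
    IsClosed {X : Matrix (Fin n) (Fin n) ℂ | X.PosSemidef} := by
  simp only [Matrix.posSemidef_iff_dotProduct_mulVec, Set.ofPred_and, Set.ofPred_forall,
    Matrix.IsHermitian]
  refine (isClosed_eq (by fun_prop) (by fun_prop)).inter (isClosed_iInter fun x => ?_)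
  exact isClosed_le continuous_const (by fun_prop)

/-- Soundness of the rule (R.Lim) for partial correctness: if `(A_j)` is Löwner-increasing
with limit `A`, `(B_j)` is Löwner-decreasing with limit `B`, all of them quantum predicates,
and `A_j ⊑ E*(B_j) + (I - E*(I))` for all `j`, then `A ⊑ E*(B) + (I - E*(I))`. -/
theorem rule_lim_sound {n : ℕ} {K : Type*} [Fintype K]
    (M : K → Matrix (Fin n) (Fin n) ℂ)
    (hM : ((1 : Matrix (Fin n) (Fin n) ℂ) - ∑ k, (M k)ᴴ * M k).PosSemidef)
    (A B : ℕ → Matrix (Fin n) (Fin n) ℂ)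
    (Alim Blim : Matrix (Fin n) (Fin n) ℂ)
    (hA₀ : ∀ j, (A j).PosSemidef) (hA₁ : ∀ j, ((1 : Matrix (Fin n) (Fin n) ℂ) - A j).PosSemidef)
    (hB₀ : ∀ j, (B j).PosSemidef) (hB₁ : ∀ j, ((1 : Matrix (Fin n) (Fin n) ℂ) - B j).PosSemidef)
    (hAmono : ∀ i j : ℕ, i ≤ j → (A j - A i).PosSemidef)
    (hBanti : ∀ i j : ℕ, i ≤ j → (B i - B j).PosSemidef)
    (hAtends : Tendsto A atTop (nhds Alim))
    (hBtends : Tendsto B atTop (nhds Blim))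
    (h : ∀ j, ((∑ k, (M k)ᴴ * B j * M k) +
        ((1 : Matrix (Fin n) (Fin n) ℂ) - ∑ k, (M k)ᴴ * (1 : Matrix (Fin n) (Fin n) ℂ) * M k)
        - A j).PosSemidef) :
    ((∑ k, (M k)ᴴ * Blim * M k) +
      ((1 : Matrix (Fin n) (Fin n) ℂ) - ∑ k, (M k)ᴴ * (1 : Matrix (Fin n) (Fin n) ℂ) * M k)
      - Alim).PosSemidef := by
  have hE : Tendsto (fun j => ∑ k, (M k)ᴴ * B j * M k) atTop
      (nhds (∑ k, (M k)ᴴ * Blim * M k)) :=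
    tendsto_finsetSum _ fun k _ => (hBtends.const_mul _).mul_const _
  exact isClosed_setOf_posSemidef.mem_of_tendsto ((hE.add_const _).sub hAtends)
    (Eventually.of_forall h)
end

section
/- (Correctness of quantum teleportation, branch form.) Let H = (1/√2)·[[1,1],[1,−1]], X = [[0,1],[1,0]], Z = [[1,0],[0,−1]] be 2×2 complex matrices, let CNOT be the 4×4 matrix acting on ℂ²⊗ℂ² by CNOT(e_a ⊗ e_b) = e_a ⊗ e_{a XOR b}, let |β₀₀⟩ = (e₀⊗e₀ + e₁⊗e₁)/√2 ∈ ℂ²⊗ℂ², and for a,b ∈ {0,1} let |ψ⟩ = α·e₀ + β·e₁ ∈ ℂ² for arbitrary α, β ∈ ℂ. Then for all i, j ∈ {0,1}: (I₂ ⊗ I₂ ⊗ (Z^i · X^j)) · ((|e_i⟩⟨e_i| ⊗ |e_j⟩⟨e_j| ⊗ I₂) · ((H ⊗ I₂ ⊗ I₂) · ((CNOT ⊗ I₂) · (|ψ⟩ ⊗ |β₀₀⟩)))) = (1/2) · (e_i ⊗ e_j ⊗ |ψ⟩). -/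
open Matrix ComplexOrder

/-- The index type of three qubits. -/
abbrev Q3 := Fin 2 × Fin 2 × Fin 2

/-- Triple Kronecker (tensor) product of `2 × 2` matrices, as a matrix on three qubits. -/
def kron3 (A B C : Matrix (Fin 2) (Fin 2) ℂ) : Matrix Q3 Q3 ℂ :=
  fun p q => A p.1 q.1 * B p.2.1 q.2.1 * C p.2.2 q.2.2

/-- Triple tensor product of vectors in `ℂ²`. -/
def vec3 (u v w : Fin 2 → ℂ) : Q3 → ℂ :=
  fun p => u p.1 * v p.2.1 * w p.2.2

/-- The Hadamard gate. -/
noncomputable def Hgate : Matrix (Fin 2) (Fin 2) ℂ := (Real.sqrt 2 : ℂ)⁻¹ • !![1, 1; 1, -1]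

/-- The Pauli X gate. -/
def Xgate : Matrix (Fin 2) (Fin 2) ℂ := !![0, 1; 1, 0]

/-- The Pauli Z gate. -/
def Zgate : Matrix (Fin 2) (Fin 2) ℂ := !![1, 0; 0, -1]

/-- The CNOT gate on two qubits: `CNOT (e_a ⊗ e_b) = e_a ⊗ e_{a XOR b}`. -/
def CNOTgate : Matrix (Fin 2 × Fin 2) (Fin 2 × Fin 2) ℂ :=
  fun p q => if p.1 = q.1 ∧ p.2 = q.1 + q.2 then 1 else 0

/-- `CNOT ⊗ I₂`, acting on the first two of three qubits. -/
def CNOT12 : Matrix Q3 Q3 ℂ :=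
  fun p q => CNOTgate (p.1, p.2.1) (q.1, q.2.1) * (if p.2.2 = q.2.2 then 1 else 0)

/-- The standard basis vector `e_i` of `ℂ²`. -/
def e2 (i : Fin 2) : Fin 2 → ℂ := fun k => if k = i then 1 else 0

/-- The rank-one projection `|e_i⟩⟨e_i|`. -/
def proj (i : Fin 2) : Matrix (Fin 2) (Fin 2) ℂ :=
  fun k l => if k = i ∧ l = i then 1 else 0

/-- The EPR pair `|β₀₀⟩ = (e₀ ⊗ e₀ + e₁ ⊗ e₁)/√2`. -/
noncomputable def beta00 : Fin 2 × Fin 2 → ℂ :=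
  fun p => if p.1 = p.2 then (Real.sqrt 2 : ℂ)⁻¹ else 0

/-- The input state `|ψ⟩ = α e₀ + β e₁`. -/
def psi (α β : ℂ) : Fin 2 → ℂ := ![α, β]

/-- Correctness of quantum teleportation, branch form: in every measurement branch `(i, j)`,
applying the Pauli correction `Z^i X^j` to the third qubit yields `(1/2) e_i ⊗ e_j ⊗ |ψ⟩`. -/
theorem teleportation_branch_correct (α β : ℂ) (i j : Fin 2) :
    (kron3 1 1 (Zgate ^ (i : ℕ) * Xgate ^ (j : ℕ))).mulVec
      ((kron3 (proj i) (proj j) 1).mulVec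
        ((kron3 Hgate 1 1).mulVec
          (CNOT12.mulVec (fun p => psi α β p.1 * beta00 (p.2.1, p.2.2))))) =
    (2⁻¹ : ℂ) • vec3 (e2 i) (e2 j) (psi α β) := by
  -- The two factors `1/√2`, from the EPR pair and from the Hadamard gate, give the amplitude `1/2`.
  have hs : (Real.sqrt 2 : ℂ)⁻¹ * (Real.sqrt 2 : ℂ)⁻¹ = 2⁻¹ := by
    rw [← mul_inv, ← Complex.ofReal_mul, Real.mul_self_sqrt zero_le_two, Complex.ofReal_ofNat]
  rw [← hs]
  -- Before the correction, the unprojected amplitude at `(a, b, c)` is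
  -- `(1/2) * (-1)^(a * (b + c)) * ψ (b + c)`, with `b + c` taken mod 2: at `(a, b) = (i, j)` the
  -- third qubit holds `X^j Z^i ψ / 2`, which `Z^i X^j` inverts as `X² = Z² = 1`.
  -- Each bit pattern is compared entrywise.
  ext ⟨a, b, c⟩
  fin_cases i <;> fin_cases j <;> fin_cases a <;> fin_cases b <;> fin_cases c <;>
    simp [Matrix.mulVec, dotProduct, Fintype.sum_prod_type, kron3, vec3, Hgate, Xgate, Zgate,
      CNOT12, CNOTgate, e2, proj, beta00, psi, Matrix.one_apply] <;>
    ring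
end

section
/- Let (M_k) be a finite family of n×n complex matrices with Σ_k M_k† M_k ⊑ I, defining E(ρ) = Σ_k M_k ρ M_k†, and let B be a quantum predicate (Hermitian n×n matrix with 0 ⊑ B ⊑ I). Then the partial-correctness triple ⊨_par {I} E {B} — i.e., Re(tr(ρ)) ≤ Re(tr(B · E(ρ))) + (Re(tr(ρ)) − Re(tr(E(ρ)))) for every positive semidefinite ρ with tr(ρ) ≤ 1 — holds if and only if Re(tr(B · E(ρ))) = Re(tr(E(ρ))) for every density operator ρ (positive semidefinite with tr(ρ) = 1): the probability that the output satisfies B equals the probability that the program terminates. -/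
/-!
The inequality `tr (B * E ρ) ≤ tr (E ρ)` always holds, as `B ⊑ I` and `E ρ` is positive
semidefinite (`re_trace_mul_le`), and the triple with precondition `I` is the reverse inequality
after cancelling `tr ρ`. Passing from density operators back to partial ones is a rescaling by
`1 / tr ρ`, the case `tr ρ = 0` forcing `ρ = 0`.
-/

open Matrix ComplexOrder

open scoped MatrixOrder Matrix.Norms.L2Operator in
/-- `tr (B σ) ≤ tr σ` on positive semidefinite `σ`: writing `σ = Cᴴ C`, the difference of the
two traces is the trace of the positive semidefinite matrix `C (1 - B) Cᴴ`. -/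
lemma re_trace_mul_le {n : ℕ} {B σ : Matrix (Fin n) (Fin n) ℂ}
    (hB : ((1 : Matrix (Fin n) (Fin n) ℂ) - B).PosSemidef) (hσ : σ.PosSemidef) :
    ((B * σ).trace).re ≤ σ.trace.re := by
  obtain ⟨C, rfl⟩ : ∃ C : Matrix (Fin n) (Fin n) ℂ, σ = Cᴴ * C :=
    CStarAlgebra.nonneg_iff_eq_star_mul_self.mp hσ.nonneg
  have h := (hB.mul_mul_conjTranspose_same C).trace_nonneg
  have e : (C * (1 - B) * Cᴴ).trace = (Cᴴ * C).trace - (B * (Cᴴ * C)).trace := by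
    rw [Matrix.trace_mul_comm, ← Matrix.mul_assoc, Matrix.trace_mul_comm, sub_mul, one_mul,
      Matrix.trace_sub]
  rw [e] at h
  have := (Complex.le_def.mp h).1
  simp only [Complex.zero_re, Complex.sub_re] at this
  linarith

/-- The partial-correctness triple `⊨_par {I} E {B}` holds iff, for every density operator
`ρ`, the probability that the output satisfies `B` equals the probability that the program
terminates: `Re (tr (B * E ρ)) = Re (tr (E ρ))`. -/
theorem partial_correctness_true_precondition_iff {n : ℕ} {K : Type*} [Fintype K]
    (M : K → Matrix (Fin n) (Fin n) ℂ)
    (hM : ((1 : Matrix (Fin n) (Fin n) ℂ) - ∑ k, (M k)ᴴ * M k).PosSemidef)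
    (B : Matrix (Fin n) (Fin n) ℂ)
    (hB₀ : B.PosSemidef) (hB₁ : ((1 : Matrix (Fin n) (Fin n) ℂ) - B).PosSemidef) :
    (∀ ρ : Matrix (Fin n) (Fin n) ℂ, ρ.PosSemidef → ρ.trace.re ≤ 1 →
        ρ.trace.re ≤ ((B * ∑ k, M k * ρ * (M k)ᴴ).trace).re +
          (ρ.trace.re - ((∑ k, M k * ρ * (M k)ᴴ).trace).re)) ↔
      (∀ ρ : Matrix (Fin n) (Fin n) ℂ, ρ.PosSemidef → ρ.trace = 1 →
        ((B * ∑ k, M k * ρ * (M k)ᴴ).trace).re = ((∑ k, M k * ρ * (M k)ᴴ).trace).re) := by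
  constructor
  · intro h ρ hρ ht
    have h1 := h ρ hρ (by simp [ht])
    have h2 : (∑ k, M k * ρ * (M k)ᴴ).PosSemidef :=
      Matrix.posSemidef_sum _ fun k _ => hρ.mul_mul_conjTranspose_same (M k)
    have h3 := re_trace_mul_le hB₁ h2
    linarith
  · intro h ρ hρ _
    by_cases h0 : ρ.trace = 0
    · have : ρ = 0 := hρ.trace_eq_zero_iff.mp h0
      simp [this]
    · have hnn := hρ.trace_nonneg
      have hr : (ρ.trace.re : ℂ) = ρ.trace :=
        Complex.ext (by simp) (by simpa using (Complex.le_def.mp hnn).2)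
      have hpos : 0 < ρ.trace.re := by
        refine lt_of_le_of_ne (Complex.le_def.mp hnn).1 fun h' => h0 ?_
        rw [← hr, ← h']; simp
      have key := h (ρ.trace⁻¹ • ρ) (hρ.smul (inv_nonneg.mpr hnn))
        (by rw [Matrix.trace_smul, smul_eq_mul, inv_mul_cancel₀ h0])
      simp only [Matrix.mul_smul, Matrix.smul_mul, ← Finset.smul_sum, Matrix.trace_smul] at key
      rw [← hr, ← Complex.ofReal_inv] at key
      simp only [smul_eq_mul, Complex.re_ofReal_mul] at key
      have := mul_left_cancel₀ (inv_ne_zero hpos.ne') key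
      linarith
end
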